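/- For the single-head softmax-attention model Φ(X; U, W) = ⟨U, φ(XWX^T)X⟩ with parameter θ = concat(U, W) ∈ R^{Td+d²}, the Hessian of Φ with respect to θ satisfies the spectral-norm bound ‖∇²_θ Φ(X; θ)‖ ≤ 6 d² · ‖X‖_{2,∞} · ‖X‖³_{1,∞} · Σ_{t=1}^T ‖X u_t‖_∞ + 2 d √(T d) · ‖X‖_{2,∞} · ‖X‖²_{1,∞}. -/

import Mathlib

/-!
Along a line `s ↦ (U + sA, W + sB)` the logits of row `t` are affine in `s`, say `z + s b`, and
`Φ = Σₜ (Eₜ[c] + s Eₜ[a])`, where `Eₜ` is the expectation under the softmax weights of row `t`,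
`c = X uₜ` and `a = X aₜ`. Differentiating an expectation of this kind gives a covariance,
`E[v]' = E[b v] - E[b] E[v]` (`hasDerivAt_softmaxMean`). Hence the second derivative at `0` is the sum
over `t` of `E[b²c] - 2 E[b] E[bc] - E[b²] E[c] + 2 E[b]² E[c] + 2 (E[ba] - E[b] E[a])`.

Every expectation is at most the sup norm of its argument, so a row contributes at most
`6 ‖b‖∞² ‖c‖∞ + 4 ‖b‖∞ ‖a‖∞`. By Cauchy–Schwarz `‖b‖∞ ≤ ‖B‖_F ‖X‖²_{2,∞}` and
`‖a‖∞ ≤ ‖aₜ‖ ‖X‖_{2,∞}`. Summing over `t`, with `Σₜ ‖aₜ‖ ≤ √T ‖A‖_F`,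
`2 ‖A‖_F ‖B‖_F ≤ ‖A‖_F² + ‖B‖_F²` and `‖X‖_{2,∞} ≤ √d ‖X‖_{1,∞}`, gives the bound.
-/

open Finset

/-- The softmax map `φ : ℝ^T → ℝ^T`, `φ(v)_t = exp(v_t) / Σ_s exp(v_s)`. -/
noncomputable def smax {T : ℕ} (v : Fin T → ℝ) : Fin T → ℝ :=
  fun t => Real.exp (v t) / ∑ s, Real.exp (v s)

/-- The softmax logits: the `(t, s)` entry of `X W Xᵀ`, i.e. `xₜᵀ W x_s`. -/
noncomputable def attnScores {T d : ℕ} (X : Fin T → Fin d → ℝ)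
    (W : Fin d → Fin d → ℝ) (t : Fin T) : Fin T → ℝ :=
  fun s => ∑ j, ∑ k, X t j * W j k * X s k

/-- The single-head attention model `Φ(X; U, W) = ⟨U, φ(X W Xᵀ) X⟩`. -/
noncomputable def attnPhi {T d : ℕ} (X U : Fin T → Fin d → ℝ)
    (W : Fin d → Fin d → ℝ) : ℝ :=
  ∑ t, ∑ t', smax (attnScores X W t) t' * ∑ j, U t j * X t' j

/-- `‖X‖_{2,∞}`: the maximum Euclidean norm of a row of `X`. -/
noncomputable def norm2inf {T d : ℕ} (X : Fin T → Fin d → ℝ) : ℝ :=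
  ⨆ t : Fin T, Real.sqrt (∑ j, X t j ^ 2)

/-- `‖X‖_{1,∞}`: the maximum absolute entry of `X`. -/
noncomputable def norm1inf {T d : ℕ} (X : Fin T → Fin d → ℝ) : ℝ :=
  ⨆ t : Fin T, ⨆ j : Fin d, |X t j|

/-- `‖X uₜ‖_∞`: the maximum absolute entry of the vector `X uₜ`. -/
noncomputable def XuInf {T d : ℕ} (X U : Fin T → Fin d → ℝ) (t : Fin T) : ℝ :=
  ⨆ s : Fin T, |∑ j, X s j * U t j|

/-! ### Expectations under softmax weights with affine logits -/

/-- The expectation of `v` under the softmax weights with logits `z + s b`. -/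
noncomputable def softmaxMean {T : ℕ} (z b v : Fin T → ℝ) (s : ℝ) : ℝ :=
  (∑ i, Real.exp (z i + s * b i) * v i) / ∑ i, Real.exp (z i + s * b i)

lemma sum_exp_pos {T : ℕ} [Nonempty (Fin T)] (w : Fin T → ℝ) : 0 < ∑ i, Real.exp (w i) :=
  Finset.sum_pos (fun _ _ => Real.exp_pos _) Finset.univ_nonempty

lemma hasDerivAt_softmaxMean {T : ℕ} [Nonempty (Fin T)] (z b v : Fin T → ℝ) (s : ℝ) :
    HasDerivAt (softmaxMean z b v)
      (softmaxMean z b (fun i => b i * v i) s - softmaxMean z b b s * softmaxMean z b v s) s := by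
  have hexp : ∀ i, HasDerivAt (fun s : ℝ => Real.exp (z i + s * b i))
      (Real.exp (z i + s * b i) * b i) s := fun i => by
    have h : HasDerivAt (fun s : ℝ => z i + s * b i) (b i) s := by
      simpa using ((hasDerivAt_id s).mul_const (b i)).const_add (z i)
    exact h.exp
  have hN : HasDerivAt (fun s : ℝ => ∑ i, Real.exp (z i + s * b i) * v i)
      (∑ i, Real.exp (z i + s * b i) * b i * v i) s :=
    HasDerivAt.fun_sum fun i _ => (hexp i).mul_const (v i)
  have hZ : HasDerivAt (fun s : ℝ => ∑ i, Real.exp (z i + s * b i))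
      (∑ i, Real.exp (z i + s * b i) * b i) s :=
    HasDerivAt.fun_sum fun i _ => hexp i
  have hpos := sum_exp_pos fun i => z i + s * b i
  refine (hN.fun_div hZ hpos.ne').congr_deriv ?_
  simp only [softmaxMean, ← mul_assoc]
  field_simp

lemma abs_softmaxMean_le {T : ℕ} [Nonempty (Fin T)] (z b v : Fin T → ℝ) (s V : ℝ)
    (hv : ∀ i, |v i| ≤ V) : |softmaxMean z b v s| ≤ V := by
  have hpos := sum_exp_pos fun i => z i + s * b i
  rw [softmaxMean, abs_div, abs_of_pos hpos, div_le_iff₀ hpos, Finset.mul_sum]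
  refine (Finset.abs_sum_le_sum_abs _ _).trans (Finset.sum_le_sum fun i _ => ?_)
  rw [abs_mul, Real.abs_exp, mul_comm]
  exact mul_le_mul_of_nonneg_right (hv i) (Real.exp_pos _).le

/-- The derivative in `s` of one row `E[c] + s E[a]` of the attention model. -/
noncomputable def rowDeriv {T : ℕ} (z b c a : Fin T → ℝ) (s : ℝ) : ℝ :=
  (softmaxMean z b (fun i => b i * c i) s - softmaxMean z b b s * softmaxMean z b c s)
    + (softmaxMean z b a s
      + s * (softmaxMean z b (fun i => b i * a i) s - softmaxMean z b b s * softmaxMean z b a s))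

lemma hasDerivAt_row {T : ℕ} [Nonempty (Fin T)] (z b c a : Fin T → ℝ) (s : ℝ) :
    HasDerivAt (fun s => softmaxMean z b c s + s * softmaxMean z b a s) (rowDeriv z b c a s) s := by
  refine ((hasDerivAt_softmaxMean z b c s).fun_add
    ((hasDerivAt_id' s).fun_mul (hasDerivAt_softmaxMean z b a s))).congr_deriv ?_
  simp only [rowDeriv]
  ring

/-- The second derivative at `0` of one row `E[c] + s E[a]` of the attention model. -/
noncomputable def rowSecond {T : ℕ} (z b c a : Fin T → ℝ) : ℝ :=
  softmaxMean z b (fun i => b i * (b i * c i)) 0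
    - 2 * (softmaxMean z b b 0 * softmaxMean z b (fun i => b i * c i) 0)
    - softmaxMean z b (fun i => b i * b i) 0 * softmaxMean z b c 0
    + 2 * (softmaxMean z b b 0 * softmaxMean z b b 0 * softmaxMean z b c 0)
    + 2 * (softmaxMean z b (fun i => b i * a i) 0 - softmaxMean z b b 0 * softmaxMean z b a 0)

lemma hasDerivAt_rowDeriv {T : ℕ} [Nonempty (Fin T)] (z b c a : Fin T → ℝ) :
    HasDerivAt (rowDeriv z b c a) (rowSecond z b c a) 0 := by
  have h := fun v => hasDerivAt_softmaxMean z b v 0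
  refine (((h (fun i => b i * c i)).fun_sub ((h b).fun_mul (h c))).fun_add
    ((h a).fun_add ((hasDerivAt_id' (0 : ℝ)).fun_mul
      ((h (fun i => b i * a i)).fun_sub ((h b).fun_mul (h a)))))).congr_deriv ?_
  simp only [rowSecond]
  ring

lemma abs_rowSecond_le {T : ℕ} [Nonempty (Fin T)] (z b c a : Fin T → ℝ) (β γ α : ℝ)
    (hb : ∀ i, |b i| ≤ β) (hc : ∀ i, |c i| ≤ γ) (ha : ∀ i, |a i| ≤ α) :
    |rowSecond z b c a| ≤ 6 * (β ^ 2 * γ) + 4 * (β * α) := by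
  have key : ∀ {x y p q : ℝ}, |x| ≤ p → |y| ≤ q → |x * y| ≤ p * q := fun {x y p q} hx hy => by
    rw [abs_mul]
    exact mul_le_mul hx hy (abs_nonneg _) ((abs_nonneg _).trans hx)
  have eb := abs_softmaxMean_le z b b 0 β hb
  have ec := abs_softmaxMean_le z b c 0 γ hc
  have ea := abs_softmaxMean_le z b a 0 α ha
  have ebc := abs_softmaxMean_le z b (fun i => b i * c i) 0 _ fun i => key (hb i) (hc i)
  have eba := abs_softmaxMean_le z b (fun i => b i * a i) 0 _ fun i => key (hb i) (ha i)
  have ebb := abs_softmaxMean_le z b (fun i => b i * b i) 0 _ fun i => key (hb i) (hb i)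
  have ebbc := abs_softmaxMean_le z b (fun i => b i * (b i * c i)) 0 _
    fun i => key (hb i) (key (hb i) (hc i))
  have h1 := abs_le.mp ebbc
  have h2 := abs_le.mp (key eb ebc)
  have h3 := abs_le.mp (key ebb ec)
  have h4 := abs_le.mp (key (key eb eb) ec)
  have h5 := abs_le.mp eba
  have h6 := abs_le.mp (key eb ea)
  rw [rowSecond, abs_le]
  constructor <;> linarith [h1.1, h1.2, h2.1, h2.2, h3.1, h3.2, h4.1, h4.2, h5.1, h5.2, h6.1, h6.2]

/-! ### Norm estimates -/

lemma abs_sum_mul_le {d : ℕ} (f g : Fin d → ℝ) :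
    |∑ j, f j * g j| ≤ √(∑ j, f j ^ 2) * √(∑ j, g j ^ 2) := by
  rw [← Real.sqrt_mul (Finset.sum_nonneg fun _ _ => sq_nonneg _)]
  exact Real.abs_le_sqrt (Finset.sum_mul_sq_le_sq_mul_sq _ _ _)

lemma abs_bilin_le {d : ℕ} (x y : Fin d → ℝ) (B : Fin d → Fin d → ℝ) :
    |∑ j, ∑ k, x j * B j k * y k| ≤
      √(∑ j, ∑ k, B j k ^ 2) * (√(∑ j, x j ^ 2) * √(∑ k, y k ^ 2)) := by
  have hrow : ∑ j, (∑ k, B j k * y k) ^ 2 ≤ (∑ j, ∑ k, B j k ^ 2) * ∑ k, y k ^ 2 := by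
    rw [Finset.sum_mul]
    exact Finset.sum_le_sum fun j _ => Finset.sum_mul_sq_le_sq_mul_sq _ _ _
  have hsplit : ∑ j, ∑ k, x j * B j k * y k = ∑ j, x j * ∑ k, B j k * y k := by
    simp only [Finset.mul_sum, mul_assoc]
  rw [hsplit]
  calc _ ≤ √(∑ j, x j ^ 2) * √(∑ j, (∑ k, B j k * y k) ^ 2) := abs_sum_mul_le _ _
    _ ≤ √(∑ j, x j ^ 2) * √((∑ j, ∑ k, B j k ^ 2) * ∑ k, y k ^ 2) := by gcongr
    _ = _ := by
      rw [Real.sqrt_mul (Finset.sum_nonneg fun _ _ => Finset.sum_nonneg fun _ _ => sq_nonneg _)]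
      ring

lemma row_le_norm2inf {T d : ℕ} (X : Fin T → Fin d → ℝ) (t : Fin T) :
    √(∑ j, X t j ^ 2) ≤ norm2inf X :=
  le_ciSup (f := fun t : Fin T => √(∑ j, X t j ^ 2)) (Set.finite_range _).bddAbove t

lemma norm2inf_nonneg {T d : ℕ} (X : Fin T → Fin d → ℝ) : 0 ≤ norm2inf X :=
  Real.iSup_nonneg fun _ => Real.sqrt_nonneg _

lemma norm1inf_nonneg {T d : ℕ} (X : Fin T → Fin d → ℝ) : 0 ≤ norm1inf X :=
  Real.iSup_nonneg fun _ => Real.iSup_nonneg fun _ => abs_nonneg _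

lemma XuInf_nonneg {T d : ℕ} (X U : Fin T → Fin d → ℝ) (t : Fin T) : 0 ≤ XuInf X U t :=
  Real.iSup_nonneg fun _ => abs_nonneg _

lemma entry_le_norm1inf {T d : ℕ} (X : Fin T → Fin d → ℝ) (t : Fin T) (j : Fin d) :
    |X t j| ≤ norm1inf X :=
  (le_ciSup (f := fun j => |X t j|) (Set.finite_range _).bddAbove j).trans
    (le_ciSup (f := fun t : Fin T => ⨆ j : Fin d, |X t j|) (Set.finite_range _).bddAbove t)

lemma entry_le_XuInf {T d : ℕ} (X U : Fin T → Fin d → ℝ) (t s : Fin T) :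
    |∑ j, U t j * X s j| ≤ XuInf X U t := by
  simp only [mul_comm (U t _)]
  exact le_ciSup (f := fun s : Fin T => |∑ j, X s j * U t j|) (Set.finite_range _).bddAbove s

lemma norm2inf_le {T d : ℕ} (X : Fin T → Fin d → ℝ) : norm2inf X ≤ √d * norm1inf X := by
  refine Real.iSup_le (fun t => ?_) (mul_nonneg (Real.sqrt_nonneg _) (norm1inf_nonneg X))
  rw [← Real.sqrt_sq (norm1inf_nonneg X), ← Real.sqrt_mul (Nat.cast_nonneg _)]
  refine Real.sqrt_le_sqrt ?_
  calc ∑ j, X t j ^ 2 ≤ ∑ _j : Fin d, norm1inf X ^ 2 :=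
        Finset.sum_le_sum fun j _ => sq_le_sq' (abs_le.mp (entry_le_norm1inf X t j)).1
          (abs_le.mp (entry_le_norm1inf X t j)).2
    _ = _ := by simp

/-! ### The attention model along a line -/

lemma attnPhi_line {T d : ℕ} (X U A : Fin T → Fin d → ℝ) (W B : Fin d → Fin d → ℝ) (s : ℝ) :
    attnPhi X (U + s • A) (W + s • B) =
      ∑ t, (softmaxMean (attnScores X W t) (attnScores X B t) (fun i => ∑ j, U t j * X i j) s
        + s * softmaxMean (attnScores X W t) (attnScores X B t)
            (fun i => ∑ j, A t j * X i j) s) := by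
  have hscore : ∀ t i, attnScores X (W + s • B) t i
      = attnScores X W t i + s * attnScores X B t i := fun t i => by
    simp only [attnScores, Finset.mul_sum, ← Finset.sum_add_distrib]
    refine Finset.sum_congr rfl fun j _ => Finset.sum_congr rfl fun k _ => ?_
    simp only [Pi.add_apply, Pi.smul_apply, smul_eq_mul]
    ring
  have hval : ∀ t i, ∑ j, (U + s • A) t j * X i j
      = ∑ j, U t j * X i j + s * ∑ j, A t j * X i j := fun t i => by
    simp only [Finset.mul_sum, ← Finset.sum_add_distrib]
    refine Finset.sum_congr rfl fun j _ => ?_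
    simp only [Pi.add_apply, Pi.smul_apply, smul_eq_mul]
    ring
  refine Finset.sum_congr rfl fun t _ => ?_
  simp only [smax, softmaxMean, hscore, hval]
  rw [← mul_div_assoc, ← add_div, Finset.mul_sum, ← Finset.sum_add_distrib, Finset.sum_div]
  refine Finset.sum_congr rfl fun i _ => ?_
  ring

lemma iteratedDeriv_attnPhi {T d : ℕ} (X U A : Fin T → Fin d → ℝ) (W B : Fin d → Fin d → ℝ) :
    iteratedDeriv 2 (fun s : ℝ => attnPhi X (U + s • A) (W + s • B)) 0 =
      ∑ t, rowSecond (attnScores X W t) (attnScores X B t)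
        (fun i => ∑ j, U t j * X i j) (fun i => ∑ j, A t j * X i j) := by
  rw [iteratedDeriv_succ, iteratedDeriv_one]
  simp only [attnPhi_line]
  have h1 : deriv (fun s => ∑ t,
      (softmaxMean (attnScores X W t) (attnScores X B t) (fun i => ∑ j, U t j * X i j) s
        + s * softmaxMean (attnScores X W t) (attnScores X B t)
            (fun i => ∑ j, A t j * X i j) s))
      = fun s => ∑ t, rowDeriv (attnScores X W t) (attnScores X B t)
        (fun i => ∑ j, U t j * X i j) (fun i => ∑ j, A t j * X i j) s := by
    funext s
    refine (HasDerivAt.fun_sum fun t _ => ?_).deriv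
    have : Nonempty (Fin T) := ⟨t⟩
    exact hasDerivAt_row _ _ _ _ s
  rw [h1]
  refine (HasDerivAt.fun_sum fun t _ => ?_).deriv
  have : Nonempty (Fin T) := ⟨t⟩
  exact hasDerivAt_rowDeriv _ _ _ _

/-- Hessian spectral-norm bound for the single-head attention model
with parameter `θ = concat(U, W)`:
`‖∇²_θ Φ(X; θ)‖ ≤ 6 d² ‖X‖_{2,∞} ‖X‖³_{1,∞} Σ_t ‖X uₜ‖_∞ + 2 d √(T d) ‖X‖_{2,∞} ‖X‖²_{1,∞}`.
Since the Hessian is symmetric, the spectral-norm bound is expressed through its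
quadratic form: for every direction `(A, B)`, the second derivative of
`s ↦ Φ(X; U + sA, W + sB)` at `0` (which equals `(A,B)ᵀ (∇²_θ Φ) (A,B)`) is bounded
in absolute value by the above constant times `‖(A, B)‖² = ‖A‖_F² + ‖B‖_F²`. -/
theorem attention_hessian_spectral_bound {T d : ℕ}
    (X U : Fin T → Fin d → ℝ) (W : Fin d → Fin d → ℝ) :
    ∀ (A : Fin T → Fin d → ℝ) (B : Fin d → Fin d → ℝ),
      |iteratedDeriv 2 (fun s : ℝ => attnPhi X (U + s • A) (W + s • B)) 0| ≤
        (6 * (d : ℝ) ^ 2 * norm2inf X * norm1inf X ^ 3 * (∑ t, XuInf X U t)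
          + 2 * (d : ℝ) * Real.sqrt ((T : ℝ) * d) * norm2inf X * norm1inf X ^ 2)
        * ((∑ t, ∑ j, A t j ^ 2) + ∑ j, ∑ k, B j k ^ 2) := by
  intro A B
  set M := norm2inf X
  set m := norm1inf X
  set a := √(∑ t, ∑ j, A t j ^ 2)
  set b := √(∑ j, ∑ k, B j k ^ 2)
  set S := ∑ t, XuInf X U t
  have hM : 0 ≤ M := norm2inf_nonneg X
  have hm : 0 ≤ m := norm1inf_nonneg X
  have hS : 0 ≤ S := Finset.sum_nonneg fun t _ => XuInf_nonneg X U t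
  have ha2 : ∑ t, ∑ j, A t j ^ 2 = a ^ 2 := (Real.sq_sqrt
    (Finset.sum_nonneg fun _ _ => Finset.sum_nonneg fun _ _ => sq_nonneg _)).symm
  have hb2 : ∑ j, ∑ k, B j k ^ 2 = b ^ 2 := (Real.sq_sqrt
    (Finset.sum_nonneg fun _ _ => Finset.sum_nonneg fun _ _ => sq_nonneg _)).symm
  have ha : 0 ≤ a := Real.sqrt_nonneg _
  have hb : 0 ≤ b := Real.sqrt_nonneg _
  -- Cauchy–Schwarz over the rows of `A`.
  have hrows : ∑ t, √(∑ j, A t j ^ 2) ≤ √T * a := by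
    rw [← Real.sqrt_mul (Nat.cast_nonneg _)]
    refine Real.le_sqrt_of_sq_le ?_
    refine sq_sum_le_card_mul_sum_sq.trans_eq ?_
    rw [Finset.card_univ, Fintype.card_fin]
    congr 1
    exact Finset.sum_congr rfl fun t _ => Real.sq_sqrt (Finset.sum_nonneg fun _ _ => sq_nonneg _)
  have hbound : |iteratedDeriv 2 (fun s : ℝ => attnPhi X (U + s • A) (W + s • B)) 0| ≤
      6 * ((b * (M * M)) ^ 2 * S) + 4 * (b * (M * M) * (√T * a * M)) := by
    rw [iteratedDeriv_attnPhi]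
    calc _ ≤ ∑ t, (6 * ((b * (M * M)) ^ 2 * XuInf X U t)
          + 4 * (b * (M * M) * (√(∑ j, A t j ^ 2) * M))) := by
          refine (Finset.abs_sum_le_sum_abs _ _).trans (Finset.sum_le_sum fun t _ => ?_)
          have : Nonempty (Fin T) := ⟨t⟩
          refine abs_rowSecond_le _ _ _ _ _ _ _ (fun i => ?_) (fun i => entry_le_XuInf X U t i)
            (fun i => ?_)
          · refine (abs_bilin_le (X t) (X i) B).trans ?_
            gcongr
            · exact row_le_norm2inf X t
            · exact row_le_norm2inf X i
          · refine (abs_sum_mul_le (A t) (X i)).trans ?_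
            gcongr
            exact row_le_norm2inf X i
      _ = 6 * ((b * (M * M)) ^ 2 * S)
          + 4 * (b * (M * M) * ((∑ t, √(∑ j, A t j ^ 2)) * M)) := by
          simp only [Finset.sum_add_distrib, ← Finset.mul_sum, ← Finset.sum_mul, S]
      _ ≤ _ := by gcongr
  rw [ha2, hb2]
  refine hbound.trans ?_
  rcases Nat.eq_zero_or_pos d with hd | hd
  · -- Without columns all rows are zero, so `M = 0` and both sides vanish.
    have hM0 : M = 0 := le_antisymm ((norm2inf_le X).trans_eq (by simp [hd])) hM
    simp [hM0]
  have hd1 : (1 : ℝ) ≤ d := by exact_mod_cast hd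
  have hsd1 : 1 ≤ √(d : ℝ) := Real.one_le_sqrt.mpr hd1
  have hsd2 : √(d : ℝ) ^ 2 = d := Real.sq_sqrt (Nat.cast_nonneg _)
  have hMm : M ≤ √d * m := norm2inf_le X
  have hMm2 : M ^ 2 ≤ d * m ^ 2 := by
    calc M ^ 2 ≤ (√d * m) ^ 2 := by gcongr
      _ = d * m ^ 2 := by rw [mul_pow, hsd2]
  have hMm1 : M ≤ d * m := hMm.trans (by gcongr; nlinarith)
  have hsT : √(T : ℝ) ≤ √((T : ℝ) * d) :=
    Real.sqrt_le_sqrt (le_mul_of_one_le_right (Nat.cast_nonneg _) hd1)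
  have hfirst : 6 * ((b * (M * M)) ^ 2 * S) ≤
      6 * (d : ℝ) ^ 2 * M * m ^ 3 * S * (a ^ 2 + b ^ 2) := by
    calc 6 * ((b * (M * M)) ^ 2 * S) = 6 * M * S * (M ^ 2 * M) * b ^ 2 := by ring
      _ ≤ 6 * M * S * (d * m ^ 2 * (d * m)) * (a ^ 2 + b ^ 2) := by
        gcongr
        exact le_add_of_nonneg_left (sq_nonneg a)
      _ = _ := by ring
  have hsecond : 4 * (b * (M * M) * (√T * a * M)) ≤
      2 * (d : ℝ) * √((T : ℝ) * d) * M * m ^ 2 * (a ^ 2 + b ^ 2) := by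
    calc 4 * (b * (M * M) * (√T * a * M)) = 2 * M * √T * M ^ 2 * (2 * a * b) := by ring
      _ ≤ 2 * M * √((T : ℝ) * d) * (d * m ^ 2) * (a ^ 2 + b ^ 2) := by
        gcongr
        exact two_mul_le_add_sq a b
      _ = _ := by ring
  rw [add_mul]
  exact add_le_add hfirst hsecond
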